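/- Let ρ_AB be a bipartite density matrix on ℂ²⊗ℂ^{d_B} (the measured system A is a qubit). If D_{B|A}(ρ_AB) = 0, then either ρ_AB is an incoherent-quantum state, i.e. (Δ_A⊗id)(ρ_AB) = ρ_AB, or ρ_AB is a product state, i.e. ρ_AB = ρ_A ⊗ ρ_B. -/

import Mathlib

open Matrix Kronecker BigOperators
open scoped ComplexOrder

noncomputable section

/-- The completely dephasing map `Δ`: keeps only the diagonal entries. -/
def deph {n : Type*} [DecidableEq n] (M : Matrix n n ℂ) : Matrix n n ℂ :=
  Matrix.of fun i j => if i = j then M i j else 0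

/-- A density matrix: positive semidefinite with unit trace. -/
def IsDensityMatrix {n : Type*} [Fintype n] (ρ : Matrix n n ℂ) : Prop :=
  ρ.PosSemidef ∧ ρ.trace = 1

/-- Von Neumann entropy (base 2): `S(ρ) = -∑ λ_k log₂ λ_k`. -/
def vnEntropy {n : Type*} [Fintype n] [DecidableEq n] (ρ : Matrix n n ℂ) : ℝ :=
  if h : ρ.IsHermitian then -∑ k, h.eigenvalues k * Real.logb 2 (h.eigenvalues k) else 0

/-- Partial trace over the second factor: `ρ_A = tr_B ρ_AB`. -/
def ptrB {A B : Type*} [Fintype B] (ρ : Matrix (A × B) (A × B) ℂ) : Matrix A A ℂ :=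
  Matrix.of fun a a' => ∑ b, ρ (a, b) (a', b)

/-- Partial trace over the first factor: `ρ_B = tr_A ρ_AB`. -/
def ptrA {A B : Type*} [Fintype A] (ρ : Matrix (A × B) (A × B) ℂ) : Matrix B B ℂ :=
  Matrix.of fun b b' => ∑ a, ρ (a, b) (a, b')

/-- `p_i = tr((|i⟩⟨i|⊗1) ρ_AB)`. -/
def probA {A B : Type*} [Fintype B] (ρ : Matrix (A × B) (A × B) ℂ) (i : A) : ℝ :=
  (∑ b, ρ (i, b) (i, b)).re

/-- `ρ_{B|i} = tr_A((|i⟩⟨i|⊗1) ρ_AB) / p_i`. -/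
def condB {A B : Type*} [Fintype B] (ρ : Matrix (A × B) (A × B) ℂ) (i : A) :
    Matrix B B ℂ :=
  ((probA ρ i : ℝ) : ℂ)⁻¹ • Matrix.of fun b b' => ρ (i, b) (i, b')

/-- Quantum discord based on incoherent measurement:
`D_{B|A}(ρ) = ∑ᵢ pᵢ S(ρ_{B|i}) + S(ρ_A) − S(ρ_AB)`. -/
def QDI {A B : Type*} [Fintype A] [Fintype B] [DecidableEq A] [DecidableEq B]
    (ρ : Matrix (A × B) (A × B) ℂ) : ℝ :=
  (∑ i, probA ρ i * vnEntropy (condB ρ i)) + vnEntropy (ptrB ρ) - vnEntropy ρ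

/-- Dephasing on the first subsystem: `Δ_A ⊗ id`. -/
def dephA {A B : Type*} [DecidableEq A] (ρ : Matrix (A × B) (A × B) ℂ) :
    Matrix (A × B) (A × B) ℂ :=
  Matrix.of fun p q => if p.1 = q.1 then ρ p q else 0

/-- Dephasing on the second subsystem: `id ⊗ Δ_B`. -/
def dephB {A B : Type*} [DecidableEq B] (ρ : Matrix (A × B) (A × B) ℂ) :
    Matrix (A × B) (A × B) ℂ :=
  Matrix.of fun p q => if p.2 = q.2 then ρ p q else 0

/-- Trace out the last system of a tripartite state on `A × (B × B')`, leaving `A × B`. -/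
def ptrB2 {A B B' : Type*} [Fintype B'] (ρ : Matrix (A × B × B') (A × B × B') ℂ) :
    Matrix (A × B) (A × B) ℂ :=
  Matrix.of fun p q => ∑ c, ρ (p.1, p.2, c) (q.1, q.2, c)

/-- Trace out the middle system of a tripartite state on `A × (B × B')`, leaving `A × B'`. -/
def ptrB1 {A B B' : Type*} [Fintype B] (ρ : Matrix (A × B × B') (A × B × B') ℂ) :
    Matrix (A × B') (A × B') ℂ :=
  Matrix.of fun p q => ∑ b, ρ (p.1, b, p.2) (q.1, b, q.2)

set_option linter.unusedSectionVars false
set_option linter.unusedSimpArgs false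


/-- the function whose derivative is `resF` -/
def logF {n : Type*} [Fintype n] (m : n → n → ℝ) (r s : n → ℝ) (T : ℝ) : ℝ :=
  ∑ k, ∑ j, m k j * r j * (Real.log (s k + T * r j) - Real.log (s k))

def resF {n : Type*} [Fintype n] (m : n → n → ℝ) (r s : n → ℝ) (T : ℝ) : ℝ :=
  ∑ k, ∑ j, m k j * (r j ^ 2 / (s k + T * r j))

structure Dat {n : Type*} [Fintype n] (m : n → n → ℝ) (r s : n → ℝ) : Prop where
  m0 : ∀ k j, 0 ≤ m k j
  r0 : ∀ j, 0 ≤ r j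
  s0 : ∀ k, 0 ≤ s k
  col : ∀ j, ∑ k, m k j = 1
  row : ∀ k, ∑ j, m k j * r j = s k
  tot : ∑ j, r j = 1

lemma Dat.pos {n : Type*} [Fintype n] {m : n → n → ℝ} {r s : n → ℝ} (h : Dat m r s)
    {k j : n} (hne : m k j * r j ≠ 0) : 0 < r j ∧ 0 < s k := by
  have h1 : 0 ≤ m k j * r j := mul_nonneg (h.m0 k j) (h.r0 j)
  have h2 : m k j * r j ≤ s k := by
    rw [← h.row k]
    exact Finset.single_le_sum (f := fun j => m k j * r j)
      (fun i _ => mul_nonneg (h.m0 k i) (h.r0 i)) (Finset.mem_univ j)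
  refine ⟨lt_of_le_of_ne (h.r0 j) ?_, lt_of_lt_of_le (lt_of_le_of_ne h1 hne.symm) h2⟩
  rintro h3; rw [← h3] at hne; simp at hne

lemma Dat.deriv {n : Type*} [Fintype n] {m : n → n → ℝ} {r s : n → ℝ} (h : Dat m r s)
    {T : ℝ} (hT : 0 ≤ T) : HasDerivAt (logF m r s) (resF m r s T) T := by
  unfold logF resF
  refine HasDerivAt.fun_sum fun k _ => HasDerivAt.fun_sum fun j _ => ?_
  by_cases hne : m k j * r j = 0
  · have : m k j * (r j ^ 2 / (s k + T * r j)) = 0 := by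
      rcases mul_eq_zero.1 hne with h1 | h1 <;> simp [h1]
    rw [this]; simp only [hne, zero_mul]; exact hasDerivAt_const _ _
  · obtain ⟨h1, h2⟩ := h.pos hne
    have h3 : 0 < s k + T * r j := by positivity
    have h4 : HasDerivAt (fun T : ℝ => s k + T * r j) (r j) T := by
      simpa using ((hasDerivAt_id T).mul_const (r j)).const_add (s k)
    have h5 := ((h4.log h3.ne').sub_const (Real.log (s k))).const_mul (m k j * r j)
    have h6 : m k j * (r j ^ 2 / (s k + T * r j)) = m k j * r j * (r j / (s k + T * r j)) := by ring
    rw [h6]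
    exact h5

lemma Dat.zero {n : Type*} [Fintype n] {m : n → n → ℝ} {r s : n → ℝ} :
    logF m r s 0 = 0 := by simp [logF]

lemma Dat.sum {n : Type*} [Fintype n] {m : n → n → ℝ} {r s : n → ℝ} (h : Dat m r s) :
    ∑ k, ∑ j, m k j * r j = 1 := by
  rw [Finset.sum_comm]; simp_rw [← Finset.sum_mul, h.col, one_mul]; exact h.tot

lemma Dat.ent {n : Type*} [Fintype n] {m : n → n → ℝ} {r s : n → ℝ} (h : Dat m r s) :
    ∑ k, ∑ j, m k j * r j * (Real.log (r j) - Real.log (s k)) =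
      ∑ j, r j * Real.log (r j) - ∑ k, s k * Real.log (s k) := by
  simp_rw [mul_sub, Finset.sum_sub_distrib]
  congr 1
  · rw [Finset.sum_comm]
    simp_rw [mul_assoc, ← Finset.sum_mul, h.col, one_mul]
  · simp_rw [← Finset.sum_mul, h.row]

lemma Dat.lim {n : Type*} [Fintype n] {m : n → n → ℝ} {r s : n → ℝ} (h : Dat m r s) :
    Filter.Tendsto (fun T => logF m r s T - Real.log T) Filter.atTop
      (nhds (∑ j, r j * Real.log (r j) - ∑ k, s k * Real.log (s k))) := by
  rw [← h.ent]
  have e : ∀ T, logF m r s T - Real.log T =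
      ∑ k, ∑ j, m k j * r j * (Real.log (s k + T * r j) - Real.log (s k) - Real.log T) := by
    intro T
    conv_lhs => rw [← one_mul (Real.log T), ← h.sum]
    simp_rw [logF, Finset.sum_mul, ← Finset.sum_sub_distrib]
    refine Finset.sum_congr rfl fun k _ => Finset.sum_congr rfl fun j _ => ?_
    ring
  simp_rw [e]
  refine tendsto_finsetSum _ fun k _ => tendsto_finsetSum _ fun j _ => ?_
  by_cases hne : m k j * r j = 0
  · simp [hne]
  · obtain ⟨h1, h2⟩ := h.pos hne
    refine Filter.Tendsto.const_mul _ ?_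
    have h3 : Filter.Tendsto (fun T : ℝ => Real.log (s k / T + r j) - Real.log (s k)) Filter.atTop
        (nhds (Real.log (r j) - Real.log (s k))) := by
      refine Filter.Tendsto.sub_const ?_ _
      have h4 : Filter.Tendsto (fun T : ℝ => s k / T + r j) Filter.atTop (nhds (r j)) := by
        simpa using (tendsto_const_nhds.div_atTop Filter.tendsto_id).add_const (r j) (f := fun T : ℝ => s k / T)
      exact h4.log h1.ne'
    refine h3.congr' ?_
    filter_upwards [Filter.eventually_gt_atTop 0] with T hT
    have : s k / T + r j = (s k + T * r j) / T := by field_simp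
    rw [this, Real.log_div (by positivity) hT.ne']
    ring

lemma scalar_main {n n' : Type*} [Fintype n] [Fintype n'] {m : n → n → ℝ} {r s : n → ℝ}
    {m' : n' → n' → ℝ} {r' s' : n' → ℝ} (h : Dat m r s) (h' : Dat m' r' s')
    (hle : ∀ t, 0 < t → resF m' r' s' t ≤ resF m r s t)
    (hD : ∑ j, r j * Real.log (r j) - ∑ k, s k * Real.log (s k) =
      ∑ j, r' j * Real.log (r' j) - ∑ k, s' k * Real.log (s' k)) :
    resF m r s 1 = resF m' r' s' 1 := by
  set G : ℝ → ℝ := fun T => logF m r s T - logF m' r' s' T with hG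
  have hd : ∀ T, 0 ≤ T → HasDerivAt G (resF m r s T - resF m' r' s' T) T := fun T hT =>
    (h.deriv hT).sub (h'.deriv hT)
  have hmono : MonotoneOn G (Set.Ici 0) := by
    refine monotoneOn_of_deriv_nonneg (convex_Ici 0)
      (fun T hT => (hd T hT).continuousAt.continuousWithinAt) ?_ ?_
    · intro T hT
      rw [interior_Ici] at hT
      exact (hd T (le_of_lt hT)).differentiableAt.differentiableWithinAt
    · intro T hT
      rw [interior_Ici] at hT
      rw [(hd T (le_of_lt hT)).deriv]
      linarith [hle T hT]
  have hlim : Filter.Tendsto G Filter.atTop (nhds 0) := by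
    have := h.lim.sub h'.lim
    rw [hD, sub_self] at this
    refine this.congr fun T => ?_
    simp [hG]
  have h0 : ∀ T, 0 ≤ T → G T = 0 := by
    intro T hT
    apply le_antisymm
    · refine ge_of_tendsto hlim ?_
      filter_upwards [Filter.eventually_ge_atTop T] with S hS
      exact hmono hT (hT.trans hS) hS
    · have := hmono (Set.mem_Ici.2 le_rfl) hT hT
      simpa [hG, Dat.zero] using this
  have h1 : HasDerivAt G 0 1 := by
    refine (hasDerivAt_const (1:ℝ) (0:ℝ)).congr_of_eventuallyEq ?_
    filter_upwards [Ioi_mem_nhds (zero_lt_one (α := ℝ))] with T hT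
    exact h0 T (le_of_lt hT)
  have := (hd 1 zero_le_one).unique h1
  linarith

/-- spectral data of a pair `ρ = U r U*`, `σ = V s V*`. -/
structure Spec {n : Type*} [Fintype n] [DecidableEq n] (ρ σ U V : Matrix n n ℂ) (r s : n → ℝ) :
    Prop where
  u1 : U * Uᴴ = 1
  u2 : Uᴴ * U = 1
  v1 : V * Vᴴ = 1
  v2 : Vᴴ * V = 1
  hρ : ρ = U * diagonal (fun i => (r i : ℂ)) * Uᴴ
  hσ : σ = V * diagonal (fun i => (s i : ℂ)) * Vᴴ

def ovl {n : Type*} [Fintype n] (U V : Matrix n n ℂ) (k j : n) : ℝ :=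
  Complex.normSq ((Vᴴ * U) k j)

def quad {n : Type*} [Fintype n] (ρ σ : Matrix n n ℂ) (t : ℝ) (X : Matrix n n ℂ) : ℝ :=
  2 * (trace (ρ * X)).re - (trace (σ * (X * Xᴴ))).re - t * (trace (ρ * (Xᴴ * X))).re

lemma Spec.dat {n : Type*} [Fintype n] [DecidableEq n] {ρ σ U V : Matrix n n ℂ} {r s : n → ℝ}
    (h : Spec ρ σ U V r s) (r0 : ∀ j, 0 ≤ r j) (s0 : ∀ j, 0 ≤ s j) (tot : ∑ j, r j = 1)
    (hd : ∀ k, (Vᴴ * ρ * V) k k = s k) : Dat (ovl U V) r s := by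
  refine ⟨fun k j => Complex.normSq_nonneg _, r0, s0, ?_, ?_, tot⟩
  · intro j
    have h1 : ((Vᴴ * U)ᴴ * (Vᴴ * U)) j j = 1 := by
      have : (Vᴴ * U)ᴴ * (Vᴴ * U) = 1 := by
        rw [conjTranspose_mul, conjTranspose_conjTranspose, Matrix.mul_assoc,
          ← Matrix.mul_assoc V, h.v1, Matrix.one_mul, h.u2]
      rw [this, one_apply_eq]
    rw [Matrix.mul_apply] at h1
    have h2 : ((∑ k, ovl U V k j : ℝ) : ℂ) = 1 := by
      rw [← h1]; push_cast
      refine Finset.sum_congr rfl fun k _ => ?_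
      rw [ovl, Complex.normSq_eq_conj_mul_self, conjTranspose_apply]; rfl
    exact_mod_cast h2
  · intro k
    have h1 := hd k
    have : Vᴴ * ρ * V = (Vᴴ * U) * diagonal (fun i => (r i : ℂ)) * (Vᴴ * U)ᴴ := by
      rw [h.hρ, conjTranspose_mul, conjTranspose_conjTranspose]; simp only [Matrix.mul_assoc]
    rw [this, Matrix.mul_apply] at h1
    have h2 : ((∑ j, ovl U V k j * r j : ℝ) : ℂ) = s k := by
      rw [← h1]; push_cast
      refine Finset.sum_congr rfl fun j _ => ?_
      rw [ovl, Complex.normSq_eq_conj_mul_self, conjTranspose_apply, mul_diagonal]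
      simp only [RCLike.star_def]; ring
    exact_mod_cast h2

lemma Spec.quad_coord {n : Type*} [Fintype n] [DecidableEq n] {ρ σ U V : Matrix n n ℂ}
    {r s : n → ℝ} (h : Spec ρ σ U V r s) (t : ℝ) (X : Matrix n n ℂ) :
    quad ρ σ t X = ∑ k, ∑ j, (2 * r j * (star ((Vᴴ * U) k j) * (Vᴴ * X * U) k j).re
      - (s k + t * r j) * Complex.normSq ((Vᴴ * X * U) k j)) := by
  set x := Vᴴ * X * U with hx
  set z := Vᴴ * U with hz
  have hzx : zᴴ * x = Uᴴ * X * U := by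
    rw [hz, hx, conjTranspose_mul, conjTranspose_conjTranspose]
    simp only [Matrix.mul_assoc]
    rw [← Matrix.mul_assoc V, h.v1, Matrix.one_mul]
  have hxx : xᴴ * x = Uᴴ * (Xᴴ * X) * U := by
    rw [hx, conjTranspose_mul, conjTranspose_mul, conjTranspose_conjTranspose]
    simp only [Matrix.mul_assoc]
    rw [← Matrix.mul_assoc V, h.v1, Matrix.one_mul]
  have hxx2 : x * xᴴ = Vᴴ * (X * Xᴴ) * V := by
    rw [hx, conjTranspose_mul, conjTranspose_mul, conjTranspose_conjTranspose]
    simp only [Matrix.mul_assoc]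
    rw [← Matrix.mul_assoc U, h.u1, Matrix.one_mul]
  have tU : ∀ M : Matrix n n ℂ, trace (ρ * M) = ∑ j, (r j : ℂ) * (Uᴴ * M * U) j j := by
    intro M
    have : trace (ρ * M) = trace (diagonal (fun i => (r i : ℂ)) * (Uᴴ * M * U)) := by
      rw [h.hρ, Matrix.mul_assoc, Matrix.mul_assoc, Matrix.trace_mul_comm]
      simp only [Matrix.mul_assoc]
    rw [this]; simp [trace, diagonal_mul]
  have tV : ∀ M : Matrix n n ℂ, trace (σ * M) = ∑ j, (s j : ℂ) * (Vᴴ * M * V) j j := by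
    intro M
    have : trace (σ * M) = trace (diagonal (fun i => (s i : ℂ)) * (Vᴴ * M * V)) := by
      rw [h.hσ, Matrix.mul_assoc, Matrix.mul_assoc, Matrix.trace_mul_comm]
      simp only [Matrix.mul_assoc]
    rw [this]; simp [trace, diagonal_mul]
  have e1 : (trace (ρ * X)).re = ∑ k, ∑ j, r j * (star (z k j) * x k j).re := by
    rw [tU, ← hzx, Finset.sum_comm, Complex.re_sum]
    refine Finset.sum_congr rfl fun j _ => ?_
    rw [Complex.re_ofReal_mul, Matrix.mul_apply, Complex.re_sum, Finset.mul_sum]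
    rfl
  have e2 : (trace (ρ * (Xᴴ * X))).re = ∑ k, ∑ j, r j * Complex.normSq (x k j) := by
    rw [tU, ← hxx, Finset.sum_comm, Complex.re_sum]
    refine Finset.sum_congr rfl fun j _ => ?_
    rw [Complex.re_ofReal_mul, Matrix.mul_apply, Complex.re_sum, Finset.mul_sum]
    refine Finset.sum_congr rfl fun k _ => ?_
    rw [conjTranspose_apply, RCLike.star_def, ← Complex.normSq_eq_conj_mul_self, Complex.ofReal_re]
  have e3 : (trace (σ * (X * Xᴴ))).re = ∑ k, ∑ j, s k * Complex.normSq (x k j) := by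
    rw [tV, ← hxx2, Complex.re_sum]
    refine Finset.sum_congr rfl fun k _ => ?_
    rw [Complex.re_ofReal_mul, Matrix.mul_apply, Complex.re_sum, Finset.mul_sum]
    refine Finset.sum_congr rfl fun j _ => ?_
    rw [conjTranspose_apply, RCLike.star_def, Complex.mul_conj, Complex.ofReal_re]
  rw [quad, e1, e2, e3]
  simp_rw [Finset.mul_sum, ← Finset.sum_sub_distrib]
  refine Finset.sum_congr rfl fun k _ => Finset.sum_congr rfl fun j _ => ?_
  ring

lemma sq_term (r s t : ℝ) (hr : 0 ≤ r) (hs : 0 ≤ s) (ht : 0 < t) (z x : ℂ) :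
    Complex.normSq z * (r ^ 2 / (s + t * r)) -
      (2 * r * (star z * x).re - (s + t * r) * Complex.normSq x) =
    Complex.normSq (r * z - ((s + t * r : ℝ) : ℂ) * x) / (s + t * r) := by
  rcases eq_or_lt_of_le (show 0 ≤ s + t * r by positivity) with h | h
  · have : r = 0 := by
      have : t * r ≤ 0 := by linarith
      nlinarith
    rw [← h]; simp [this]
  · generalize s + t * r = w at *
    field_simp
    simp [Complex.normSq_apply]
    ring

lemma Spec.gap {n : Type*} [Fintype n] [DecidableEq n] {ρ σ U V : Matrix n n ℂ}
    {r s : n → ℝ} (h : Spec ρ σ U V r s) (r0 : ∀ j, 0 ≤ r j) (s0 : ∀ j, 0 ≤ s j)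
    {t : ℝ} (ht : 0 < t) (X : Matrix n n ℂ) :
    resF (ovl U V) r s t - quad ρ σ t X = ∑ k, ∑ j,
      Complex.normSq (r j * (Vᴴ * U) k j - ((s k + t * r j : ℝ) : ℂ) * (Vᴴ * X * U) k j)
        / (s k + t * r j) := by
  rw [h.quad_coord, resF]
  simp_rw [← Finset.sum_sub_distrib]
  refine Finset.sum_congr rfl fun k _ => Finset.sum_congr rfl fun j _ => ?_
  exact sq_term _ _ _ (r0 j) (s0 k) ht _ _

lemma Spec.le {n : Type*} [Fintype n] [DecidableEq n] {ρ σ U V : Matrix n n ℂ}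
    {r s : n → ℝ} (h : Spec ρ σ U V r s) (r0 : ∀ j, 0 ≤ r j) (s0 : ∀ j, 0 ≤ s j)
    {t : ℝ} (ht : 0 < t) (X : Matrix n n ℂ) :
    quad ρ σ t X ≤ resF (ovl U V) r s t := by
  have := h.gap r0 s0 ht X
  have h2 : 0 ≤ resF (ovl U V) r s t - quad ρ σ t X := by
    rw [this]
    refine Finset.sum_nonneg fun k _ => Finset.sum_nonneg fun j _ => ?_
    have := r0 j; have := s0 k
    exact div_nonneg (Complex.normSq_nonneg _) (by positivity)
  linarith

lemma Spec.attained {n : Type*} [Fintype n] [DecidableEq n] {ρ σ U V : Matrix n n ℂ}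
    {r s : n → ℝ} (h : Spec ρ σ U V r s) (r0 : ∀ j, 0 ≤ r j) (s0 : ∀ j, 0 ≤ s j)
    {t : ℝ} (ht : 0 < t) : ∃ X : Matrix n n ℂ, quad ρ σ t X = resF (ovl U V) r s t := by
  let x : Matrix n n ℂ := Matrix.of fun k j => r j * (Vᴴ * U) k j / ((s k + t * r j : ℝ) : ℂ)
  refine ⟨V * x * Uᴴ, ?_⟩
  have hx : Vᴴ * (V * x * Uᴴ) * U = x := by
    simp only [Matrix.mul_assoc]
    rw [h.u2, ← Matrix.mul_assoc, h.v2, Matrix.one_mul, Matrix.mul_one]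
  have := h.gap r0 s0 ht (V * x * Uᴴ)
  rw [hx] at this
  rw [eq_comm, ← sub_eq_zero, this]
  refine Finset.sum_eq_zero fun k _ => Finset.sum_eq_zero fun j _ => ?_
  by_cases hw : s k + t * r j = 0
  · rw [hw]; simp
  · have hw' : ((s k + t * r j : ℝ) : ℂ) ≠ 0 := by exact_mod_cast hw
    have : (r j : ℂ) * (Vᴴ * U) k j - ((s k + t * r j : ℝ) : ℂ) * x k j = 0 := by
      simp only [x, of_apply]
      rw [mul_div_cancel₀ _ hw', sub_self]
    rw [this]; simp

lemma Spec.stationary {n : Type*} [Fintype n] [DecidableEq n] {ρ σ U V : Matrix n n ℂ}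
    {r s : n → ℝ} (h : Spec ρ σ U V r s) (r0 : ∀ j, 0 ≤ r j) (s0 : ∀ j, 0 ≤ s j)
    {t : ℝ} (ht : 0 < t) {X : Matrix n n ℂ} (hX : quad ρ σ t X = resF (ovl U V) r s t) :
    σ * X + (t : ℂ) • (X * ρ) = ρ := by
  have hg := h.gap r0 s0 ht X
  rw [hX, sub_self, eq_comm] at hg
  have hn : ∀ k j, 0 ≤ Complex.normSq (r j * (Vᴴ * U) k j - ((s k + t * r j : ℝ) : ℂ) *
      (Vᴴ * X * U) k j) / (s k + t * r j) := by
    intro k j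
    have := r0 j; have := s0 k
    exact div_nonneg (Complex.normSq_nonneg _) (by positivity)
  rw [Finset.sum_eq_zero_iff_of_nonneg fun k _ => Finset.sum_nonneg fun j _ => hn k j] at hg
  have hent : ∀ k j, (r j : ℂ) * (Vᴴ * U) k j = ((s k + t * r j : ℝ) : ℂ) * (Vᴴ * X * U) k j := by
    intro k j
    have h1 := hg k (Finset.mem_univ k)
    rw [Finset.sum_eq_zero_iff_of_nonneg fun j _ => hn k j] at h1
    have h2 := h1 j (Finset.mem_univ j)
    rcases div_eq_zero_iff.1 h2 with h3 | h3
    · exact sub_eq_zero.1 (Complex.normSq_eq_zero.1 h3)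
    · have h4 : r j = 0 := by
        have := r0 j; have := s0 k
        have : t * r j ≤ 0 := by linarith
        nlinarith
      rw [h3, h4]; simp
  have hM : (Vᴴ * U) * diagonal (fun i => (r i : ℂ)) =
      diagonal (fun i => (s i : ℂ)) * (Vᴴ * X * U)
        + (t : ℂ) • ((Vᴴ * X * U) * diagonal (fun i => (r i : ℂ))) := by
    ext k j
    rw [Matrix.add_apply, Matrix.smul_apply, mul_diagonal, mul_diagonal, diagonal_mul, mul_comm,
      hent]
    push_cast; simp only [smul_eq_mul]; ring
  have hM2 := congrArg (fun M => V * M * Uᴴ) hM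
  simp only [Matrix.mul_add, Matrix.add_mul, Matrix.mul_smul, Matrix.smul_mul] at hM2
  have k1 : V * (Vᴴ * U * diagonal (fun i => (r i : ℂ))) * Uᴴ = ρ := by
    rw [Matrix.mul_assoc Vᴴ, ← Matrix.mul_assoc V, h.v1, Matrix.one_mul, h.hρ]
  have k2 : V * (diagonal (fun i => (s i : ℂ)) * (Vᴴ * X * U)) * Uᴴ = σ * X := by
    rw [h.hσ]; simp only [Matrix.mul_assoc]; rw [h.u1, Matrix.mul_one]
  have k3 : V * (Vᴴ * X * U * diagonal (fun i => (r i : ℂ))) * Uᴴ = X * ρ := by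
    rw [h.hρ]; simp only [Matrix.mul_assoc]; rw [← Matrix.mul_assoc V, h.v1, Matrix.one_mul]
  rw [k1, k2, k3] at hM2
  exact hM2.symm

lemma herm_spec {n : Type*} [Fintype n] [DecidableEq n] {M : Matrix n n ℂ} (h : M.IsHermitian) :
    (h.eigenvectorUnitary : Matrix n n ℂ) * (h.eigenvectorUnitary : Matrix n n ℂ)ᴴ = 1 ∧
    (h.eigenvectorUnitary : Matrix n n ℂ)ᴴ * (h.eigenvectorUnitary : Matrix n n ℂ) = 1 ∧
    M = (h.eigenvectorUnitary : Matrix n n ℂ) * diagonal (fun i => (h.eigenvalues i : ℂ)) *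
      (h.eigenvectorUnitary : Matrix n n ℂ)ᴴ := by
  refine ⟨?_, ?_, ?_⟩
  · exact (Matrix.mem_unitaryGroup_iff).1 h.eigenvectorUnitary.2
  · exact (Matrix.mem_unitaryGroup_iff').1 h.eigenvectorUnitary.2
  · conv_lhs => rw [h.spectral_theorem, Unitary.conjStarAlgAut_apply]
    rfl

lemma vn_eq {n : Type*} [Fintype n] [DecidableEq n] {M : Matrix n n ℂ} (h : M.IsHermitian) :
    vnEntropy M * Real.log 2 = -∑ k, h.eigenvalues k * Real.log (h.eigenvalues k) := by
  rw [vnEntropy, dif_pos h, neg_mul, Finset.sum_mul]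
  congr 1
  refine Finset.sum_congr rfl fun k _ => ?_
  have : Real.log 2 ≠ 0 := (Real.log_pos (by norm_num)).ne'
  rw [Real.logb]; field_simp

def blk {A B : Type*} (ρ : Matrix (A × B) (A × B) ℂ) (i : A) : Matrix B B ℂ :=
  Matrix.of fun b b' => ρ (i, b) (i, b')

def bd {A B : Type*} [DecidableEq A] (W : A → Matrix B B ℂ) : Matrix (A × B) (A × B) ℂ :=
  (blockDiagonal W).submatrix Prod.swap Prod.swap

section gen
variable {A B : Type*} [Fintype A] [Fintype B] [DecidableEq A] [DecidableEq B]

lemma bd_mul (W W' : A → Matrix B B ℂ) : bd W * bd W' = bd (fun i => W i * W' i) := by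
  rw [bd, bd, bd, blockDiagonal_mul]
  exact Matrix.submatrix_mul_equiv _ _ _ (Equiv.prodComm A B) _

lemma bd_conj (W : A → Matrix B B ℂ) : (bd W)ᴴ = bd (fun i => (W i)ᴴ) := by
  rw [bd, bd, ← blockDiagonal_conjTranspose]; rfl

lemma bd_one : bd (fun _ : A => (1 : Matrix B B ℂ)) = 1 := by
  ext ⟨a, b⟩ ⟨a', b'⟩
  simp [bd, blockDiagonal_apply, one_apply, Prod.ext_iff]
  grind

lemma bd_diag (s : A → B → ℂ) :
    bd (fun i => diagonal (s i)) = diagonal (fun x : A × B => s x.1 x.2) := by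
  ext ⟨a, b⟩ ⟨a', b'⟩
  simp [bd, blockDiagonal_apply, diagonal_apply, Prod.ext_iff]
  grind

lemma bd_blk (ρ : Matrix (A × B) (A × B) ℂ) : bd (blk ρ) = dephA ρ := by
  ext ⟨a, b⟩ ⟨a', b'⟩
  simp only [bd, blockDiagonal_apply, dephA, blk, submatrix_apply, of_apply, Prod.swap]
  split_ifs with h
  · rw [h]
  · rfl

lemma bd_compress (ρ : Matrix (A × B) (A × B) ℂ) (W : A → Matrix B B ℂ) (k : A × B) :
    ((bd W)ᴴ * ρ * bd W) k k = ((W k.1)ᴴ * blk ρ k.1 * W k.1) k.2 k.2 := by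
  obtain ⟨i, κ⟩ := k
  rw [bd_conj]
  simp only [Matrix.mul_apply, Fintype.sum_prod_type, bd, blockDiagonal_apply, submatrix_apply,
    Prod.swap, blk, of_apply, ite_mul, mul_ite, zero_mul, mul_zero]
  simp [Finset.sum_ite_irrel]

lemma blk_psd {ρ : Matrix (A × B) (A × B) ℂ} (h : ρ.PosSemidef) (i : A) :
    (blk ρ i).PosSemidef := h.submatrix (fun b => (i, b))

lemma blk_trace {ρ : Matrix (A × B) (A × B) ℂ} (h : ρ.PosSemidef) (i : A) :
    (blk ρ i).trace = probA ρ i := by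
  have h1 : 0 ≤ (blk ρ i).trace := (blk_psd h i).trace_nonneg
  exact Complex.eq_re_of_ofReal_le h1

lemma probA_nonneg {ρ : Matrix (A × B) (A × B) ℂ} (h : ρ.PosSemidef) (i : A) :
    0 ≤ probA ρ i := by
  have h1 : 0 ≤ (blk ρ i).trace := (blk_psd h i).trace_nonneg
  rw [blk_trace h] at h1
  exact_mod_cast h1

lemma blk_cond {ρ : Matrix (A × B) (A × B) ℂ} (h : ρ.PosSemidef) (i : A) :
    blk ρ i = (probA ρ i : ℂ) • condB ρ i := by
  by_cases hp : probA ρ i = 0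
  · rw [hp]
    have := blk_trace h i
    rw [hp, Complex.ofReal_zero, (blk_psd h i).trace_eq_zero_iff] at this
    simp [this]
  · have : (probA ρ i : ℂ) ≠ 0 := by exact_mod_cast hp
    rw [condB, smul_smul, mul_inv_cancel₀ this, one_smul, blk]

lemma cond_psd {ρ : Matrix (A × B) (A × B) ℂ} (h : ρ.PosSemidef) (i : A) :
    (condB ρ i).PosSemidef := by
  have : (0 : ℂ) ≤ (probA ρ i : ℂ)⁻¹ := by
    rw [← Complex.ofReal_inv]
    exact_mod_cast inv_nonneg.2 (probA_nonneg h i)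
  exact (blk_psd h i).smul this

lemma ptrB_psd {ρ : Matrix (A × B) (A × B) ℂ} (h : ρ.PosSemidef) : (ptrB ρ).PosSemidef := by
  have : ptrB ρ = ∑ b, ρ.submatrix (fun a => (a, b)) (fun a => (a, b)) := by
    ext a a'; simp [ptrB, Matrix.sum_apply]
  rw [this]
  exact posSemidef_sum _ fun b _ => h.submatrix _

lemma ptrB_diag {ρ : Matrix (A × B) (A × B) ℂ} (h : ρ.PosSemidef) (i : A) :
    ptrB ρ i i = probA ρ i := by
  rw [← blk_trace h]; rfl

lemma ptrB_trace (ρ : Matrix (A × B) (A × B) ℂ) : (ptrB ρ).trace = ρ.trace := by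
  simp [trace, ptrB, Fintype.sum_prod_type]

lemma ptrB_deph (ρ : Matrix (A × B) (A × B) ℂ) : ptrB (dephA ρ) = deph (ptrB ρ) := by
  ext a a'
  simp only [ptrB, dephA, deph, of_apply]
  split_ifs <;> simp

lemma trace_kron (ρ : Matrix (A × B) (A × B) ℂ) (Y : Matrix A A ℂ) :
    trace (ρ * (Y ⊗ₖ (1 : Matrix B B ℂ))) = trace (ptrB ρ * Y) := by
  simp only [trace, diag_apply, Matrix.mul_apply, Fintype.sum_prod_type, kroneckerMap_apply,
    one_apply, ptrB, of_apply, mul_ite, mul_one, mul_zero, Finset.sum_ite_eq', Finset.mem_univ,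
    if_true, Finset.sum_mul]
  refine Finset.sum_congr rfl fun a _ => ?_
  rw [Finset.sum_comm]

lemma quad_kron (ρ : Matrix (A × B) (A × B) ℂ) (t : ℝ) (Y : Matrix A A ℂ) :
    quad ρ (dephA ρ) t (Y ⊗ₖ (1 : Matrix B B ℂ)) = quad (ptrB ρ) (deph (ptrB ρ)) t Y := by
  rw [quad, quad, conjTranspose_kronecker, conjTranspose_one, ← mul_kronecker_mul,
    ← mul_kronecker_mul, Matrix.one_mul, trace_kron, trace_kron, trace_kron, ptrB_deph]

lemma stat_gen (ρ : Matrix (A × B) (A × B) ℂ) (hρ : IsDensityMatrix ρ) (hD : QDI ρ = 0) :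
    ∃ Y : Matrix A A ℂ, dephA ρ * (Y ⊗ₖ (1 : Matrix B B ℂ)) + (Y ⊗ₖ (1 : Matrix B B ℂ)) * ρ = ρ := by
  obtain ⟨hp, htr⟩ := hρ
  have hh := hp.1
  have hA := ptrB_psd hp
  have hc := fun i => (cond_psd hp i)
  set p := probA ρ with hpdef
  have hp0 : ∀ i, 0 ≤ p i := probA_nonneg hp
  set r := hh.eigenvalues with hr
  set q := hA.1.eigenvalues with hq
  set lam := fun i => (hc i).1.eigenvalues with hlam
  set s : A × B → ℝ := fun x => p x.1 * lam x.1 x.2 with hs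
  have r0 : ∀ j, 0 ≤ r j := hp.eigenvalues_nonneg
  have q0 : ∀ j, 0 ≤ q j := hA.eigenvalues_nonneg
  have lam0 : ∀ i j, 0 ≤ lam i j := fun i => (hc i).eigenvalues_nonneg
  have s0 : ∀ j, 0 ≤ s j := fun j => mul_nonneg (hp0 _) (lam0 _ _)
  have rtot : ∑ j, r j = 1 := by
    have h1 : ρ.trace = ∑ i, ((hh.eigenvalues i : ℝ) : ℂ) := hh.trace_eq_sum_eigenvalues
    rw [htr] at h1; exact_mod_cast h1.symm
  have qtot : ∑ j, q j = 1 := by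
    have h1 : (ptrB ρ).trace = ∑ i, ((hA.1.eigenvalues i : ℝ) : ℂ) := hA.1.trace_eq_sum_eigenvalues
    rw [ptrB_trace, htr] at h1; exact_mod_cast h1.symm
  have ltot : ∀ i, p i * ∑ j, lam i j = p i := by
    intro i
    have h1 : (condB ρ i).trace = ∑ j, (((hc i).1.eigenvalues j : ℝ) : ℂ) :=
      (hc i).1.trace_eq_sum_eigenvalues
    have h2 := congrArg trace (blk_cond hp i)
    rw [trace_smul, blk_trace hp, h1, smul_eq_mul] at h2
    exact_mod_cast h2.symm
  obtain ⟨u1, u2, u3⟩ := herm_spec hh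
  obtain ⟨a1, a2, a3⟩ := herm_spec hA.1
  set U : Matrix (A × B) (A × B) ℂ := (hh.eigenvectorUnitary).1 with hU
  set UA : Matrix A A ℂ := (hA.1.eigenvectorUnitary).1 with hUA
  set W : A → Matrix B B ℂ := fun i => ((hc i).1.eigenvectorUnitary : Matrix B B ℂ) with hW
  have w1 : ∀ i, W i * (W i)ᴴ = 1 := fun i => (herm_spec (hc i).1).1
  have w2 : ∀ i, (W i)ᴴ * W i = 1 := fun i => (herm_spec (hc i).1).2.1
  have w3 : ∀ i, blk ρ i = W i * diagonal (fun b => (s (i, b) : ℂ)) * (W i)ᴴ := by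
    intro i
    have h1 : condB ρ i = W i * diagonal (fun b => (lam i b : ℂ)) * (W i)ᴴ :=
      (herm_spec (hc i).1).2.2
    have h2 : diagonal (fun b => (s (i, b) : ℂ)) = (p i : ℂ) • diagonal (fun b => (lam i b : ℂ)) := by
      rw [← diagonal_smul]; congr 1; ext b; simp [hs]
    rw [blk_cond hp, h2, Matrix.mul_smul, Matrix.smul_mul, ← h1]
  have S1 : Spec ρ (dephA ρ) U (bd W) r s := by
    refine ⟨u1, u2, ?_, ?_, u3, ?_⟩
    · rw [bd_conj, bd_mul]; simp_rw [w1]; exact bd_one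
    · rw [bd_conj, bd_mul]; simp_rw [w2]; exact bd_one
    · rw [bd_conj, ← bd_blk, ← bd_diag (fun i b => (s (i, b) : ℂ)), bd_mul, bd_mul]
      congr 1; ext1 i; exact w3 i
  have S2 : Spec (ptrB ρ) (deph (ptrB ρ)) UA 1 q p := by
    refine ⟨a1, a2, by simp, by simp, a3, ?_⟩
    rw [Matrix.one_mul, conjTranspose_one, Matrix.mul_one]
    ext i j
    simp only [deph, of_apply, diagonal_apply]
    split_ifs with hij
    · rw [← hij, ptrB_diag hp]
    · rfl
  have D1 : Dat (ovl U (bd W)) r s := by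
    refine S1.dat r0 s0 rtot fun k => ?_
    rw [bd_compress, w3]
    have : (W k.1)ᴴ * (W k.1 * diagonal (fun b => (s (k.1, b) : ℂ)) * (W k.1)ᴴ) * W k.1 =
        diagonal (fun b => (s (k.1, b) : ℂ)) := by
      simp only [Matrix.mul_assoc]
      rw [w2, ← Matrix.mul_assoc, w2, Matrix.one_mul, Matrix.mul_one]
    rw [this, diagonal_apply_eq]
  have D2 : Dat (ovl UA 1) q p := by
    refine S2.dat q0 hp0 qtot fun k => ?_
    rw [conjTranspose_one, Matrix.one_mul, Matrix.mul_one, ptrB_diag hp]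
  have hle : ∀ t, 0 < t → resF (ovl UA 1) q p t ≤ resF (ovl U (bd W)) r s t := by
    intro t ht
    obtain ⟨Y, hY⟩ := S2.attained q0 hp0 ht
    rw [← hY, ← quad_kron]
    exact S1.le r0 s0 ht _
  have hent : ∑ k, s k * Real.log (s k) =
      ∑ i, p i * (∑ b, lam i b * Real.log (lam i b)) + ∑ i, p i * Real.log (p i) := by
    rw [Fintype.sum_prod_type, ← Finset.sum_add_distrib]
    refine Finset.sum_congr rfl fun i _ => ?_
    have h0 : p i * Real.log (p i) = ∑ b, p i * lam i b * Real.log (p i) := by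
      rw [← Finset.sum_mul, ← Finset.mul_sum, ltot i]
    rw [h0, Finset.mul_sum, ← Finset.sum_add_distrib]
    refine Finset.sum_congr rfl fun b _ => ?_
    simp only [hs]
    by_cases h1 : p i = 0
    · simp [h1]
    by_cases h2 : lam i b = 0
    · simp [h2]
    rw [Real.log_mul h1 h2]; ring
  have hD2 : ∑ j, r j * Real.log (r j) - ∑ k, s k * Real.log (s k) =
      ∑ j, q j * Real.log (q j) - ∑ k, p k * Real.log (p k) := by
    have h1 : QDI ρ * Real.log 2 = 0 := by rw [hD, zero_mul]
    rw [QDI, sub_mul, add_mul, Finset.sum_mul, vn_eq hh, vn_eq hA.1] at h1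
    simp_rw [mul_assoc, fun i => vn_eq (hc i).1, mul_neg, Finset.sum_neg_distrib] at h1
    rw [hent]
    simp only [hlam, hr, hq, hpdef]
    linarith
  have hres := scalar_main D1 D2 hle hD2
  obtain ⟨Y, hY⟩ := S2.attained q0 hp0 one_pos
  refine ⟨Y, ?_⟩
  have := S1.stationary r0 s0 one_pos (X := Y ⊗ₖ (1 : Matrix B B ℂ)) (by rw [quad_kron, hY, hres])
  simpa using this

end gen

lemma final_alg {B : Type*} [Fintype B] [DecidableEq B]
    (ρ : Matrix (Fin 2 × B) (Fin 2 × B) ℂ) (hρ : IsDensityMatrix ρ) (Y : Matrix (Fin 2) (Fin 2) ℂ)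
    (hY : dephA ρ * (Y ⊗ₖ (1 : Matrix B B ℂ)) + (Y ⊗ₖ (1 : Matrix B B ℂ)) * ρ = ρ) :
    dephA ρ = ρ ∨ ρ = (ptrB ρ) ⊗ₖ (ptrA ρ) := by
  have key : ∀ i j b c, ρ (i, b) (i, c) * Y i j + (Y i 0 * ρ (0, b) (j, c) + Y i 1 * ρ (1, b) (j, c))
      = ρ (i, b) (j, c) := by
    intro i j b c
    have := congrFun (congrFun hY (i, b)) (j, c)
    simpa [Matrix.add_apply, Matrix.mul_apply, Fintype.sum_prod_type, Fin.sum_univ_two, dephA,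
      kroneckerMap_apply, one_apply, Finset.sum_ite_irrel, Finset.sum_add_distrib] using this
  have ktr : ∀ i j, ptrB ρ i i * Y i j + (Y i 0 * ptrB ρ 0 j + Y i 1 * ptrB ρ 1 j)
      = ptrB ρ i j := by
    intro i j
    simp only [ptrB, of_apply, Finset.sum_mul, Finset.mul_sum, ← Finset.sum_add_distrib]
    exact Finset.sum_congr rfl fun b _ => key i j b b
  have hpsd := ptrB_psd hρ.1
  have hsum : ptrB ρ 0 0 + ptrB ρ 1 1 = 1 := by
    rw [← hρ.2, ← ptrB_trace, trace_fin_two]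
  have hherm : ∀ x y, ρ x y = star (ρ y x) := fun x y => (hρ.1.1.apply x y).symm
  have hc10 : ptrB ρ 1 0 = star (ptrB ρ 0 1) := (hpsd.1.apply 1 0).symm
  have hdet : ptrB ρ 0 1 ≠ 0 → ptrB ρ 0 0 ≠ 0 ∧ ptrB ρ 1 1 ≠ 0 := by
    intro hc
    have h1 : 0 ≤ (ptrB ρ).det := hpsd.det_nonneg
    rw [det_fin_two, hc10, RCLike.star_def, Complex.mul_conj] at h1
    have h2 : 0 < Complex.normSq (ptrB ρ 0 1) := Complex.normSq_pos.2 hc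
    constructor <;>
    · intro h3
      rw [h3] at h1
      simp only [zero_mul, mul_zero, zero_sub] at h1
      have h4 : (0:ℝ) ≤ -Complex.normSq (ptrB ρ 0 1) := by exact_mod_cast h1
      linarith
  have hP0 : ptrB ρ 0 0 = probA ρ 0 := ptrB_diag hρ.1 0
  have hP1 : ptrB ρ 1 1 = probA ρ 1 := ptrB_diag hρ.1 1
  have k00 := ktr 0 0
  have k01 := ktr 0 1
  have k10 := ktr 1 0
  have k11 := ktr 1 1
  set p := ptrB ρ 0 0 with hp
  set q := ptrB ρ 1 1 with hq
  by_cases hc : ptrB ρ 0 1 = 0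
  · left
    have hc' : ptrB ρ 1 0 = 0 := by rw [hc10, hc]; simp
    rw [hc] at k01 k11
    rw [hc'] at k10 k00
    have hb : Y 0 1 = 0 := by linear_combination k01 - Y 0 1 * hsum
    have hb' : Y 1 0 = 0 := by linear_combination k10 - Y 1 0 * hsum
    rw [hb] at k00; rw [hb'] at k11
    have hX : ∀ b c, ρ (0, b) (1, c) = 0 := by
      intro b c
      have h01 := key 0 1 b c
      rw [hb] at h01
      have h10 := key 1 0 c b
      rw [hb'] at h10
      by_cases hp0 : p = 0
      · have hq1 : q = 1 := by linear_combination hsum - hp0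
        rw [hq1] at k11
        have : ρ (1, c) (0, b) = 0 := by
          linear_combination -2 * h10 + ρ (1, c) (0, b) * k11
        rw [hherm, this]; simp
      · have : Y 0 0 = 1 / 2 := by
          apply mul_left_cancel₀ hp0; linear_combination k00 / 2
        rw [this] at h01
        linear_combination -2 * h01
    ext ⟨i, b⟩ ⟨j, c⟩
    simp only [dephA, of_apply]
    split_ifs with hij
    · rfl
    · fin_cases i <;> fin_cases j <;> simp at hij ⊢
      · exact (hX b c).symm
      · rw [hherm, hX c b]; simp
  · right
    obtain ⟨hp0, hq0⟩ := hdet hc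
    have hc' : ptrB ρ 1 0 ≠ 0 := by rw [hc10]; simpa using hc
    have hb : Y 0 1 ≠ 0 := by
      intro hb
      rw [hb] at k00 k01
      have h1 : Y 0 0 = 1 / 2 := by
        apply mul_left_cancel₀ hp0; linear_combination k00 / 2
      rw [h1] at k01
      exact hc (by linear_combination -2 * k01)
    have hb' : Y 1 0 ≠ 0 := by
      intro hb
      rw [hb] at k11 k10
      have h1 : Y 1 1 = 1 / 2 := by
        apply mul_left_cancel₀ hq0; linear_combination k11 / 2
      rw [h1] at k10
      exact hc' (by linear_combination -2 * k10)
    have hX10 : ∀ b c, p * ρ (1, b) (0, c) = ptrB ρ 1 0 * ρ (0, b) (0, c) := by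
      intro b c
      apply mul_left_cancel₀ hb
      linear_combination p * key 0 0 b c - ρ (0, b) (0, c) * k00
    have hX01 : ∀ b c, q * ρ (0, b) (1, c) = ptrB ρ 0 1 * ρ (1, b) (1, c) := by
      intro b c
      apply mul_left_cancel₀ hb'
      linear_combination q * key 1 1 b c - ρ (1, b) (1, c) * k11
    have hq_real : star q = q := by rw [hP1]; simp
    have hX10' : ∀ b c, q * ρ (1, b) (0, c) = ptrB ρ 1 0 * ρ (1, b) (1, c) := by
      intro b c
      have := congrArg star (hX01 c b)
      rw [star_mul', star_mul', hq_real, ← hherm, ← hherm, ← hc10] at this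
      exact this
    have hPQ : ∀ b c, q * ρ (0, b) (0, c) = p * ρ (1, b) (1, c) := by
      intro b c
      apply mul_left_cancel₀ hc'
      linear_combination p * hX10' b c - q * hX10 b c
    ext ⟨i, b⟩ ⟨j, c⟩
    have hpq := hPQ b c
    simp only [kroneckerMap_apply, ptrA, of_apply, Fin.sum_univ_two]
    fin_cases i <;> fin_cases j <;> simp only [Fin.zero_eta, Fin.mk_one]
    · rw [← hp]; linear_combination hpq - ρ (0, b) (0, c) * hsum
    · apply mul_left_cancel₀ hq0
      linear_combination hX01 b c - ptrB ρ 0 1 * hpq - ptrB ρ 0 1 * ρ (1, b) (1, c) * hsum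
    · apply mul_left_cancel₀ hp0
      linear_combination hX10 b c + ptrB ρ 1 0 * hpq - ptrB ρ 1 0 * ρ (0, b) (0, c) * hsum
    · rw [← hq]; linear_combination - hpq - ρ (1, b) (1, c) * hsum

/-- if the measured system `A` is a qubit and `D_{B|A}(ρ_AB) = 0`, then
`ρ_AB` is either an incoherent-quantum state (`(Δ_A⊗id)ρ = ρ`) or a product state. -/
theorem stmt17 {dB : ℕ} (ρ : Matrix (Fin 2 × Fin dB) (Fin 2 × Fin dB) ℂ)
    (hρ : IsDensityMatrix ρ) (hD : QDI ρ = 0) :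
    dephA ρ = ρ ∨ ρ = (ptrB ρ) ⊗ₖ (ptrA ρ) := by
  obtain ⟨Y, hY⟩ := stat_gen ρ hρ hD
  exact final_alg ρ hρ Y hY
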